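/- (Monotonicity of the expected posterior variance, used in the proof of Proposition 3.1.) For all 0 < s ≤ t, E_{x ∼ p_s}[Tr Σ_s(x)] ≤ E_{x ∼ p_t}[Tr Σ_t(x)], and for every t > 0, E_{x ∼ p_t}[Tr Σ_t(x)] ≤ Tr Cov(p), where Tr Cov(p) = E_{x∼p}[‖x − E_p[x]‖²]. -/

import Mathlib

open MeasureTheory Real
open scoped ENNReal RealInnerProductSpace

noncomputable section

/-- `ℝ^d` as a Euclidean space. -/
abbrev Euc (d : ℕ) := EuclideanSpace ℝ (Fin d)

/-- The standard Gaussian measure `γ^d` on `ℝ^d`. -/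
def stdGaussian (d : ℕ) : Measure (Euc d) :=
  volume.withDensity fun x => ENNReal.ofReal ((2 * π) ^ (-(d : ℝ) / 2) * exp (-‖x‖ ^ 2 / 2))

/-- The unnormalized measure with density `exp (-V)` with respect to Lebesgue measure. -/
def gibbs (d : ℕ) (V : Euc d → ℝ) : Measure (Euc d) :=
  volume.withDensity fun x => ENNReal.ofReal (exp (-V x))

/-- The time-`t` marginal `p_t` of the OU process `dX_t = -X_t dt + √2 dB_t` started at `p`,
i.e. the law of `e^{-t} X_0 + √(1-e^{-2t}) Z` with `X_0 ∼ p`, `Z ∼ γ^d` independent. -/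
def ouMarginal (d : ℕ) (p : Measure (Euc d)) (t : ℝ) : Measure (Euc d) :=
  (p.prod (stdGaussian d)).map fun xz =>
    exp (-t) • xz.1 + Real.sqrt (1 - exp (-2 * t)) • xz.2

/-- The (smooth, positive) density of `p_t`. -/
def ouDensity (d : ℕ) (p : Measure (Euc d)) (t : ℝ) (x : Euc d) : ℝ :=
  (2 * π * (1 - exp (-2 * t))) ^ (-(d : ℝ) / 2) *
    ∫ z, exp (-‖x - exp (-t) • z‖ ^ 2 / (2 * (1 - exp (-2 * t)))) ∂p

/-- The score `∇ ln p_t`. -/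
def score (d : ℕ) (p : Measure (Euc d)) (t : ℝ) (x : Euc d) : Euc d :=
  gradient (fun y => Real.log (ouDensity d p t y)) x

/-- The conditional law `p_{0|t}(·|x)` of `X_0` given `X_t = x`, with density (w.r.t. `p`)
proportional to `z ↦ exp (-‖x - e^{-t} z‖² / (2 (1 - e^{-2t})))`. -/
def posterior (d : ℕ) (p : Measure (Euc d)) (t : ℝ) (x : Euc d) : Measure (Euc d) :=
  ((p.withDensity fun z =>
      ENNReal.ofReal (exp (-‖x - exp (-t) • z‖ ^ 2 / (2 * (1 - exp (-2 * t)))))) Set.univ)⁻¹ •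
    (p.withDensity fun z =>
      ENNReal.ofReal (exp (-‖x - exp (-t) • z‖ ^ 2 / (2 * (1 - exp (-2 * t))))))

/-- Kullback–Leibler divergence `KL(μ ‖ ν) = ∫ log (dμ/dν) dμ`. -/
def KLdiv {α : Type*} [MeasurableSpace α] (μ ν : Measure α) : ℝ :=
  ∫ x, Real.log ((μ.rnDeriv ν x).toReal) ∂μ

/-- Mean of the posterior `p_{0|t}(·|x)`. -/
def postMean (d : ℕ) (p : Measure (Euc d)) (t : ℝ) (x : Euc d) : Euc d :=
  ∫ z, z ∂(posterior d p t x)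

/-- Trace of the covariance matrix of the posterior `p_{0|t}(·|x)`. -/
def postTrCov (d : ℕ) (p : Measure (Euc d)) (t : ℝ) (x : Euc d) : ℝ :=
  ∫ z, ‖z - postMean d p t x‖ ^ 2 ∂(posterior d p t x)

/-!
For the channel sending `X_0` to `X_t`, the expected posterior variance `E[Tr Σ_t(X_t)]` is the
Bayes risk of estimating `X_0` from `X_t` under squared loss, the posterior mean being the optimal
estimator. By the semigroup property `X_t` is obtained from `X_s`, `s ≤ t`, by rescaling and
adding independent noise, so every estimator based on `X_t` is available as a randomized estimator
based on `X_s` (data processing): the risk at time `s` is at most the risk at time `t`. An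
estimator which ignores `X_t` and returns the mean of `p` has risk `Tr Cov(p)`.
-/

section ExpectedPosteriorVariance

open ProbabilityTheory hiding posterior stdGaussian

local notation "γ" => ProbabilityTheory.stdGaussian

section SquaredLoss

variable {E : Type*} [NormedAddCommGroup E]

/-- The squared-error loss `‖θ - y‖²`, in the extended form used by `bayesRisk`. -/
def sqLoss (θ y : E) : ℝ≥0∞ := ‖θ - y‖ₑ ^ 2

lemma toReal_sqLoss (θ y : E) : (sqLoss θ y).toReal = ‖θ - y‖ ^ 2 := by
  simp [sqLoss]

variable [MeasurableSpace E] [BorelSpace E] [SecondCountableTopology E]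

lemma measurable_sqLoss : Measurable (Function.uncurry (sqLoss : E → E → ℝ≥0∞)) := by
  unfold sqLoss Function.uncurry
  fun_prop

lemma toReal_lintegral_sqLoss (μ : Measure E) (c : E) :
    (∫⁻ θ, sqLoss θ c ∂μ).toReal = ∫ θ, ‖θ - c‖ ^ 2 ∂μ := by
  simp_rw [← toReal_sqLoss]
  refine (integral_toReal measurable_sqLoss.of_uncurry_right.aemeasurable ?_).symm
  simp [sqLoss]

lemma lintegral_sqLoss_lt_top_iff {μ : Measure E} [IsFiniteMeasure μ] {c : E} :
    ∫⁻ θ, sqLoss θ c ∂μ < ∞ ↔ MemLp id 2 μ := by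
  have hsub : eLpNorm (fun θ ↦ θ - c) 2 μ < ∞ ↔ ∫⁻ θ, sqLoss θ c ∂μ < ∞ := by
    simpa [sqLoss] using eLpNorm_lt_top_iff_lintegral_rpow_enorm_lt_top (μ := μ)
      (f := fun θ ↦ θ - c) (p := 2) two_ne_zero ENNReal.ofNat_ne_top
  rw [← hsub]
  refine ⟨fun h ↦ ?_, fun h ↦ (h.sub (memLp_const c)).eLpNorm_lt_top⟩
  have hmem : MemLp (fun θ ↦ θ - c) 2 μ := ⟨by fun_prop, h⟩
  exact (hmem.add (memLp_const c)).congr_norm (by fun_prop) (by simp)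

end SquaredLoss

section BiasVariance

lemma integral_sq_norm_sub_eq_add_sq_norm_mean_sub {Ω E : Type*} [MeasurableSpace Ω]
    {μ : Measure Ω} [IsProbabilityMeasure μ] [NormedAddCommGroup E] [InnerProductSpace ℝ E]
    [CompleteSpace E] {f : Ω → E} (hf : MemLp f 2 μ) (c : E) :
    ∫ ω, ‖f ω - c‖ ^ 2 ∂μ = ∫ ω, ‖f ω - μ[f]‖ ^ 2 ∂μ + ‖μ[f] - c‖ ^ 2 := by
  have hint : Integrable f μ := hf.integrable one_le_two
  have hcentered : Integrable (fun ω ↦ f ω - μ[f]) μ := by fun_prop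
  have hsq : Integrable (fun ω ↦ ‖f ω - μ[f]‖ ^ 2) μ :=
    (hf.sub (memLp_const μ[f])).integrable_norm_pow two_ne_zero
  have : Integrable (fun ω ↦ ⟪μ[f] - c, f ω - μ[f]⟫) μ := hcentered.const_inner _
  have hcross : ∫ ω, ⟪μ[f] - c, f ω - μ[f]⟫ ∂μ = 0 := by
    rw [integral_inner hcentered, integral_sub hint (by fun_prop)]
    simp
  calc ∫ ω, ‖f ω - c‖ ^ 2 ∂μ
      = ∫ ω, (‖f ω - μ[f]‖ ^ 2 + 2 * ⟪μ[f] - c, f ω - μ[f]⟫ + ‖μ[f] - c‖ ^ 2) ∂μ := by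
        congr with ω
        rw [← sub_add_sub_cancel (f ω) μ[f] c, norm_add_sq_real, real_inner_comm]
    _ = ∫ ω, ‖f ω - μ[f]‖ ^ 2 ∂μ + ‖μ[f] - c‖ ^ 2 := by
        rw [integral_add (by fun_prop) (by fun_prop), integral_add hsq (by fun_prop),
          integral_const_mul, hcross]
        simp

variable {E : Type*} [NormedAddCommGroup E] [InnerProductSpace ℝ E] [CompleteSpace E]
  [MeasurableSpace E] [BorelSpace E] [SecondCountableTopology E]

lemma lintegral_sqLoss_mean_le (μ : Measure E) [IsProbabilityMeasure μ] (c : E) :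
    ∫⁻ θ, sqLoss θ (∫ z, z ∂μ) ∂μ ≤ ∫⁻ θ, sqLoss θ c ∂μ := by
  by_cases hμ : MemLp id 2 μ
  · have hfinite (y : E) : ∫⁻ θ, sqLoss θ y ∂μ ≠ ∞ := (lintegral_sqLoss_lt_top_iff.2 hμ).ne
    rw [← ENNReal.toReal_le_toReal (hfinite _) (hfinite _), toReal_lintegral_sqLoss,
      toReal_lintegral_sqLoss]
    exact (le_add_of_nonneg_right (sq_nonneg _)).trans_eq
      (integral_sq_norm_sub_eq_add_sq_norm_mean_sub hμ c).symm
  · exact le_top.trans_eq (not_lt_top_iff.1 (mt lintegral_sqLoss_lt_top_iff.1 hμ)).symm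

end BiasVariance

section PosteriorMean

variable {E X : Type*} [NormedAddCommGroup E] [InnerProductSpace ℝ E] [CompleteSpace E]
  [MeasurableSpace E] [BorelSpace E] [SecondCountableTopology E] [MeasurableSpace X]

lemma isArgminEstimator_sqLoss_posteriorMean (κ : Kernel E X) [IsFiniteKernel κ] (μ : Measure E)
    [IsFiniteMeasure μ] : IsArgminEstimator sqLoss κ μ fun x ↦ ∫ z, z ∂(κ†μ) x where
  measurable := stronglyMeasurable_id.integral_kernel.measurable
  property := .of_forall fun _ ↦
    le_antisymm (le_iInf (lintegral_sqLoss_mean_le _)) (iInf_le _ _)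

lemma bayesRisk_sqLoss_eq_lintegral (κ : Kernel E X) [IsFiniteKernel κ] (μ : Measure E)
    [IsFiniteMeasure μ] :
    bayesRisk sqLoss κ μ = ∫⁻ x, ∫⁻ θ, sqLoss θ (∫ z, z ∂(κ†μ) x) ∂(κ†μ) x ∂(κ ∘ₘ μ) := by
  have hmean := isArgminEstimator_sqLoss_posteriorMean κ μ
  rw [HasArgminEstimator.bayesRisk_eq measurable_sqLoss ⟨_, hmean⟩]
  exact lintegral_congr_ae (hmean.property.mono fun _ h ↦ h.symm)

lemma integral_integral_sq_norm_sub_posteriorMean (κ : Kernel E X) [IsFiniteKernel κ]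
    (μ : Measure E) [IsFiniteMeasure μ] (h : bayesRisk sqLoss κ μ ≠ ∞) :
    ∫ x, ∫ θ, ‖θ - ∫ z, z ∂(κ†μ) x‖ ^ 2 ∂(κ†μ) x ∂(κ ∘ₘ μ) = (bayesRisk sqLoss κ μ).toReal := by
  rw [bayesRisk_sqLoss_eq_lintegral] at h ⊢
  have hmeas : Measurable fun x ↦ ∫⁻ θ, sqLoss θ (∫ z, z ∂(κ†μ) x) ∂(κ†μ) x := by
    refine Measurable.lintegral_kernel_prod_right'
      (f := fun xθ : X × E ↦ sqLoss xθ.2 (∫ z, z ∂(κ†μ) xθ.1)) ?_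
    exact measurable_sqLoss.comp (measurable_snd.prodMk
      ((isArgminEstimator_sqLoss_posteriorMean κ μ).measurable.comp measurable_fst))
  simp_rw [← toReal_lintegral_sqLoss]
  exact integral_toReal hmeas.aemeasurable (ae_lt_top hmeas h)

end PosteriorMean

section BayesFormula

variable {Ω X : Type*} [MeasurableSpace Ω] [MeasurableSpace X] {κ : Kernel Ω X}
  {μ : Measure Ω} {ν : Measure X} {L : Ω → X → ℝ≥0∞}

/-- Bayes' formula as a kernel: the prior `μ` reweighted by the likelihood `L · x` of the
observation `x`, and normalized. -/
def bayesKernel (μ : Measure Ω) [SFinite μ] (L : Ω → X → ℝ≥0∞) : Kernel X Ω :=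
  (Kernel.const X μ).withDensity fun x ω ↦ (∫⁻ ω', L ω' x ∂μ)⁻¹ * L ω x

lemma bayesKernel_apply [SFinite μ] (hL : Measurable (Function.uncurry L)) (x : X) :
    bayesKernel μ L x = (μ.withDensity (L · x) .univ)⁻¹ • μ.withDensity (L · x) := by
  have hweight : Measurable (Function.uncurry fun x ω ↦ (∫⁻ ω', L ω' x ∂μ)⁻¹ * L ω x) :=
    (hL.lintegral_prod_left'.comp measurable_fst).inv.mul (hL.comp measurable_swap)
  rw [bayesKernel, Kernel.withDensity_apply _ hweight, Kernel.const_apply,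
    ← withDensity_smul _ hL.of_uncurry_right, withDensity_apply _ .univ, setLIntegral_univ]
  rfl

lemma isFiniteKernel_bayesKernel [SFinite μ] (hL : Measurable (Function.uncurry L)) :
    IsFiniteKernel (bayesKernel μ L) :=
  ⟨1, ENNReal.one_lt_top, fun x ↦ by
    rw [bayesKernel_apply hL, Measure.smul_apply, smul_eq_mul]
    exact ENNReal.inv_mul_le_one _⟩

variable [SFinite ν]

lemma comp_eq_withDensity_lintegral_likelihood [SFinite μ]
    (hL : Measurable (Function.uncurry L)) (hκ : ∀ ω, κ ω = ν.withDensity (L ω)) :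
    κ ∘ₘ μ = ν.withDensity fun x ↦ ∫⁻ ω, L ω x ∂μ := by
  ext s hs
  rw [Measure.bind_apply hs κ.aemeasurable, withDensity_apply _ hs]
  simp_rw [hκ, withDensity_apply _ hs]
  exact lintegral_lintegral_swap hL.aemeasurable

variable [IsFiniteMeasure μ] [IsFiniteKernel κ]

lemma ae_lintegral_likelihood_mul_bayesKernel (hL : Measurable (Function.uncurry L))
    (hκ : ∀ ω, κ ω = ν.withDensity (L ω)) {t : Set Ω} (ht : MeasurableSet t) :
    ∀ᵐ x ∂ν, (∫⁻ ω, L ω x ∂μ) * bayesKernel μ L x t = ∫⁻ ω in t, L ω x ∂μ := by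
  have hfinite : ∀ᵐ x ∂ν, ∫⁻ ω, L ω x ∂μ < ∞ := by
    refine ae_lt_top hL.lintegral_prod_left' ?_
    rw [← setLIntegral_univ, ← withDensity_apply _ .univ,
      ← comp_eq_withDensity_lintegral_likelihood hL hκ]
    exact measure_ne_top _ _
  filter_upwards [hfinite] with x hx
  rw [bayesKernel_apply hL, Measure.smul_apply, smul_eq_mul, withDensity_apply _ .univ,
    setLIntegral_univ, withDensity_apply _ ht]
  refine ENNReal.mul_inv_cancel_left' (fun hzero ↦ ?_) (fun htop ↦ absurd htop hx.ne)
  exact le_bot_iff.1 ((setLIntegral_le_lintegral _ _).trans_eq hzero)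

lemma compProd_bayesKernel_eq_map_swap (hL : Measurable (Function.uncurry L))
    (hκ : ∀ ω, κ ω = ν.withDensity (L ω)) :
    (κ ∘ₘ μ) ⊗ₘ bayesKernel μ L = (μ ⊗ₘ κ).map Prod.swap := by
  have := isFiniteKernel_bayesKernel (μ := μ) hL
  refine Measure.ext_prod fun {s t} hs ht ↦ ?_
  calc ((κ ∘ₘ μ) ⊗ₘ bayesKernel μ L) (s ×ˢ t)
      = ∫⁻ x in s, (∫⁻ ω, L ω x ∂μ) * bayesKernel μ L x t ∂ν := by
        rw [Measure.compProd_apply_prod hs ht, comp_eq_withDensity_lintegral_likelihood hL hκ]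
        exact setLIntegral_withDensity_eq_setLIntegral_mul _ hL.lintegral_prod_left'
          (Kernel.measurable_coe _ ht) hs
    _ = ∫⁻ x in s, ∫⁻ ω in t, L ω x ∂μ ∂ν :=
        lintegral_congr_ae (ae_restrict_of_ae (ae_lintegral_likelihood_mul_bayesKernel hL hκ ht))
    _ = ∫⁻ ω in t, κ ω s ∂μ := by
        simp_rw [hκ, withDensity_apply _ hs]
        exact (lintegral_lintegral_swap hL.aemeasurable).symm
    _ = (μ ⊗ₘ κ).map Prod.swap (s ×ˢ t) := by
        rw [Measure.map_apply measurable_swap (hs.prod ht), Set.preimage_swap_prod,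
          Measure.compProd_apply_prod ht hs]

lemma bayesKernel_ae_eq_posterior [StandardBorelSpace Ω] [Nonempty Ω]
    (hL : Measurable (Function.uncurry L)) (hκ : ∀ ω, κ ω = ν.withDensity (L ω)) :
    bayesKernel μ L =ᵐ[κ ∘ₘ μ] κ†μ :=
  have := isFiniteKernel_bayesKernel (μ := μ) hL
  ae_eq_posterior_of_compProd_eq (compProd_bayesKernel_eq_map_swap hL hκ)

end BayesFormula

section IsotropicGaussian

variable {E : Type*} [NormedAddCommGroup E] [InnerProductSpace ℝ E]

/-- The Lebesgue density of the Gaussian law on `E` with mean `m` and covariance `v • 1`. -/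
def isotropicGaussianPDF (m : E) (v : ℝ) (y : E) : ℝ :=
  (2 * π * v) ^ (-(Module.finrank ℝ E : ℝ) / 2) * exp (-‖y - m‖ ^ 2 / (2 * v))

lemma isotropicGaussianPDF_nonneg (m : E) {v : ℝ} (hv : 0 ≤ v) (y : E) :
    0 ≤ isotropicGaussianPDF m v y := by
  unfold isotropicGaussianPDF
  positivity

lemma continuous_isotropicGaussianPDF (m : E) (v : ℝ) : Continuous (isotropicGaussianPDF m v) := by
  unfold isotropicGaussianPDF
  fun_prop

variable [FiniteDimensional ℝ E] [MeasurableSpace E] [BorelSpace E]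

lemma integrable_isotropicGaussianPDF (m : E) {v : ℝ} (hv : 0 < v) :
    Integrable (isotropicGaussianPDF m v) := by
  have hexp : Integrable fun y : E ↦ exp (-‖y‖ ^ 2 / (2 * v)) := by
    have hb : 0 < ((2 * v : ℂ)⁻¹).re := by norm_cast; positivity
    simpa [Complex.norm_exp, ← Complex.ofReal_pow, neg_div, div_eq_inv_mul,
      ← Complex.ofReal_inv, ← Complex.ofReal_mul] using
      (GaussianFourier.integrable_cexp_neg_mul_sq_norm_add (V := E) hb 0 0).norm
  exact (hexp.comp_sub_right m).const_mul _

lemma integral_cexp_neg_sq_norm_add_inner {v : ℝ} (hv : 0 < v) (t : E) :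
    ((2 * π * v) ^ (-(Module.finrank ℝ E : ℝ) / 2) : ℝ) *
        ∫ y : E, Complex.exp (-(2 * v : ℂ)⁻¹ * ‖y‖ ^ 2 + Complex.I * ⟪t, y⟫) =
      Complex.exp (-(v * ‖t‖ ^ 2 / 2)) := by
  have hb : 0 < ((2 * v : ℂ)⁻¹).re := by norm_cast; positivity
  have hv' : (v : ℂ) ≠ 0 := by exact_mod_cast hv.ne'
  have hbase : π / (2 * v : ℂ)⁻¹ = (2 * π * v : ℝ) := by
    push_cast
    field_simp
  have hnorm : ((2 * π * v) ^ (-(Module.finrank ℝ E : ℝ) / 2) : ℝ) *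
      (π / (2 * v : ℂ)⁻¹) ^ (Module.finrank ℝ E / 2 : ℂ) = 1 := by
    rw [hbase, Complex.ofReal_cpow (by positivity),
      ← Complex.cpow_add _ _ (by exact_mod_cast (by positivity : 2 * π * v ≠ 0))]
    push_cast
    ring_nf
    simp
  rw [GaussianFourier.integral_cexp_neg_mul_sq_norm_add hb, ← mul_assoc, hnorm, one_mul,
    Complex.I_sq]
  congr 1
  field_simp
  ring

lemma charFun_withDensity_isotropicGaussianPDF (m : E) {v : ℝ} (hv : 0 < v) (t : E) :
    charFun (volume.withDensity fun y ↦ ENNReal.ofReal (isotropicGaussianPDF m v y)) t =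
      Complex.exp (⟪m, t⟫ * Complex.I - v * ‖t‖ ^ 2 / 2) := by
  have hmeas : Measurable fun y ↦ ENNReal.ofReal (isotropicGaussianPDF m v y) :=
    (continuous_isotropicGaussianPDF m v).measurable.ennreal_ofReal
  calc charFun (volume.withDensity fun y ↦ ENNReal.ofReal (isotropicGaussianPDF m v y)) t
      = ∫ y, isotropicGaussianPDF m v y • Complex.exp (⟪y, t⟫ * Complex.I) := by
        rw [charFun_apply, integral_withDensity_eq_integral_toReal_smul hmeas (by simp)]
        simp_rw [ENNReal.toReal_ofReal (isotropicGaussianPDF_nonneg m hv.le _)]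
    _ = ∫ y, isotropicGaussianPDF m v (y + m) • Complex.exp (⟪y + m, t⟫ * Complex.I) :=
        (integral_add_right_eq_self (μ := (volume : Measure E)) _ m).symm
    _ = ∫ y, Complex.exp (⟪m, t⟫ * Complex.I) *
          (((2 * π * v) ^ (-(Module.finrank ℝ E : ℝ) / 2) : ℝ) *
            Complex.exp (-(2 * v : ℂ)⁻¹ * ‖y‖ ^ 2 + Complex.I * ⟪t, y⟫)) := by
        congr with y
        rw [isotropicGaussianPDF, add_sub_cancel_right, Complex.real_smul, Complex.ofReal_mul,
          Complex.ofReal_exp, mul_left_comm, mul_assoc, ← Complex.exp_add, ← Complex.exp_add,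
          inner_add_left, real_inner_comm]
        push_cast
        ring_nf
    _ = Complex.exp (⟪m, t⟫ * Complex.I - v * ‖t‖ ^ 2 / 2) := by
        rw [integral_const_mul, integral_const_mul, integral_cexp_neg_sq_norm_add_inner hv,
          ← Complex.exp_add, sub_eq_add_neg]

lemma map_add_smul_stdGaussian (m : E) {σ : ℝ} (hσ : σ ≠ 0) :
    (γ E).map (fun z ↦ m + σ • z) =
      volume.withDensity fun y ↦ ENNReal.ofReal (isotropicGaussianPDF m (σ ^ 2) y) := by
  have hv : 0 < σ ^ 2 := by positivity
  have : IsFiniteMeasure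
      (volume.withDensity fun y ↦ ENNReal.ofReal (isotropicGaussianPDF m (σ ^ 2) y)) :=
    isFiniteMeasure_withDensity_ofReal (integrable_isotropicGaussianPDF m hv).2
  refine Measure.ext_of_charFun (funext fun t ↦ ?_)
  have hcomp : (fun z : E ↦ m + σ • z) = (· + m) ∘ (σ • ·) := by ext; simp [add_comm]
  rw [charFun_withDensity_isotropicGaussianPDF m hv, hcomp,
    ← Measure.map_map (by fun_prop) (by fun_prop), charFun_map_add_const, charFun_map_smul,
    charFun_stdGaussian, ← Complex.exp_add, norm_smul]
  congr 1
  push_cast [mul_pow, ← Complex.ofReal_pow, sq_abs, norm_eq_abs]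
  ring

lemma stdGaussian_eq_withDensity :
    γ E = volume.withDensity fun y ↦ ENNReal.ofReal (isotropicGaussianPDF (0 : E) 1 y) := by
  simpa using! map_add_smul_stdGaussian (0 : E) one_ne_zero

lemma map_smul_add_smul_stdGaussian_prod (a b : ℝ) :
    ((γ E).prod (γ E)).map (fun z ↦ a • z.1 + b • z.2) = (γ E).map (√(a ^ 2 + b ^ 2) • ·) := by
  have hadd : ((γ E).prod (γ E)).map (fun z ↦ a • z.1 + b • z.2) =
      (((γ E).map (a • ·)).prod ((γ E).map (b • ·))).map fun z ↦ z.1 + z.2 := by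
    rw [Measure.map_prod_map _ _ (by fun_prop) (by fun_prop),
      Measure.map_map (by fun_prop) (by fun_prop)]
    rfl
  have (c : ℝ) : IsProbabilityMeasure ((γ E).map (c • ·)) :=
    Measure.isProbabilityMeasure_map (by fun_prop)
  refine Measure.ext_of_charFun (funext fun t ↦ ?_)
  rw [hadd, charFun_map_add_prod_eq_mul, Pi.mul_apply]
  simp only [charFun_map_smul, charFun_stdGaussian, ← Complex.exp_add, norm_smul]
  congr 1
  norm_cast
  simp only [norm_eq_abs, mul_pow, sq_abs, sq_sqrt (by positivity : 0 ≤ a ^ 2 + b ^ 2)]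
  ring

end IsotropicGaussian

section GaussianChannel

variable {E : Type*} [NormedAddCommGroup E] [InnerProductSpace ℝ E] [FiniteDimensional ℝ E]
  [MeasurableSpace E] [BorelSpace E]

/-- The Gaussian channel `x ↦ law of a • x + σ • Z` with `Z` standard Gaussian: the input is scaled
by `a` and corrupted by isotropic noise of standard deviation `|σ|`. -/
def gaussianChannel (a σ : ℝ) : Kernel E E :=
  (Kernel.id ×ₖ Kernel.const E (γ E)).map fun xz ↦ a • xz.1 + σ • xz.2

lemma gaussianChannel_apply (a σ : ℝ) (x : E) :
    gaussianChannel a σ x = (γ E).map fun z ↦ a • x + σ • z := by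
  rw [gaussianChannel, Kernel.map_apply _ (by fun_prop), Kernel.prod_apply, Kernel.id_apply,
    Kernel.const_apply, Measure.dirac_prod, Measure.map_map (by fun_prop) (by fun_prop)]
  rfl

instance isMarkovKernel_gaussianChannel (a σ : ℝ) :
    IsMarkovKernel (gaussianChannel a σ : Kernel E E) :=
  Kernel.IsMarkovKernel.map _ (by fun_prop)

lemma gaussianChannel_comp_measure (a σ : ℝ) (p : Measure E) [SFinite p] :
    gaussianChannel a σ ∘ₘ p = (p.prod (γ E)).map fun xz ↦ a • xz.1 + σ • xz.2 := by
  rw [gaussianChannel, ← Measure.map_comp _ _ (by fun_prop), ← Measure.compProd_eq_comp_prod,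
    Measure.compProd_const]

lemma gaussianChannel_comp (a σ b τ : ℝ) :
    gaussianChannel b τ ∘ₖ gaussianChannel a σ =
      (gaussianChannel (b * a) √((b * σ) ^ 2 + τ ^ 2) : Kernel E E) := by
  ext1 x
  calc (gaussianChannel b τ ∘ₖ gaussianChannel a σ) x
      = (((γ E).map fun z ↦ a • x + σ • z).prod (γ E)).map fun yz ↦ b • yz.1 + τ • yz.2 := by
        rw [Kernel.comp_apply, gaussianChannel_comp_measure, gaussianChannel_apply]
    _ = ((γ E).prod (γ E)).map fun z ↦ b • (a • x + σ • z.1) + τ • z.2 := by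
        nth_rw 2 [← Measure.map_id (μ := γ E)]
        rw [Measure.map_prod_map _ _ (by fun_prop) (by fun_prop),
          Measure.map_map (by fun_prop) (by fun_prop)]
        rfl
    _ = (((γ E).prod (γ E)).map fun z ↦ (b * σ) • z.1 + τ • z.2).map ((b * a) • x + ·) := by
        rw [Measure.map_map (by fun_prop) (by fun_prop)]
        simp only [Function.comp_def, smul_add, smul_smul, add_assoc]
    _ = gaussianChannel (b * a) √((b * σ) ^ 2 + τ ^ 2) x := by
        rw [map_smul_add_smul_stdGaussian_prod, Measure.map_map (by fun_prop) (by fun_prop),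
          gaussianChannel_apply]
        rfl

lemma gaussianChannel_apply_eq_withDensity (a : ℝ) {σ : ℝ} (hσ : σ ≠ 0) (x : E) :
    gaussianChannel a σ x =
      (ENNReal.ofReal ((2 * π * σ ^ 2) ^ (-(Module.finrank ℝ E : ℝ) / 2)) • volume).withDensity
        fun y ↦ ENNReal.ofReal (exp (-‖y - a • x‖ ^ 2 / (2 * σ ^ 2))) := by
  rw [gaussianChannel_apply, map_add_smul_stdGaussian _ hσ, withDensity_smul_measure,
    ← withDensity_smul _ (by fun_prop)]
  congr with y
  rw [isotropicGaussianPDF, ENNReal.ofReal_mul (by positivity), Pi.smul_apply, smul_eq_mul]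

lemma gaussianChannel_posterior_ae_eq (p : Measure E) [IsFiniteMeasure p] (a : ℝ) {σ : ℝ}
    (hσ : σ ≠ 0) :
    bayesKernel p (fun x y ↦ ENNReal.ofReal (exp (-‖y - a • x‖ ^ 2 / (2 * σ ^ 2))))
      =ᵐ[gaussianChannel a σ ∘ₘ p] (gaussianChannel a σ)†p :=
  bayesKernel_ae_eq_posterior (by unfold Function.uncurry; fun_prop)
    fun x ↦ gaussianChannel_apply_eq_withDensity a hσ x

lemma bayesRisk_sqLoss_gaussianChannel_lt_top (p : Measure E) [IsFiniteMeasure p] {a : ℝ}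
    (ha : a ≠ 0) (σ : ℝ) : bayesRisk sqLoss (gaussianChannel a σ) p < ∞ := by
  set c := √((a⁻¹ * σ) ^ 2 + 0 ^ 2)
  have hloss (x z : E) : sqLoss x (x + c • z) = ‖c‖ₑ ^ 2 * sqLoss z 0 := by
    simp [sqLoss, enorm_smul, mul_pow]
  have hZ : ∫⁻ z, sqLoss z 0 ∂γ E < ∞ :=
    lintegral_sqLoss_lt_top_iff.2 IsGaussian.memLp_two_id
  -- The rescaled observation `a⁻¹ • y` is an estimator whose error does not depend on the input.
  calc bayesRisk sqLoss (gaussianChannel a σ) p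
      ≤ avgRisk sqLoss (gaussianChannel a σ) (gaussianChannel a⁻¹ 0) p := bayesRisk_le_avgRisk ..
    _ = ∫⁻ _, ‖c‖ₑ ^ 2 * ∫⁻ z, sqLoss z 0 ∂γ E ∂p := by
        simp_rw [avgRisk, gaussianChannel_comp, inv_mul_cancel₀ ha, gaussianChannel_apply, one_smul]
        congr with x
        rw [lintegral_map measurable_sqLoss.of_uncurry_left (by fun_prop),
          ← lintegral_const_mul _ measurable_sqLoss.of_uncurry_right]
        exact lintegral_congr (hloss x)
    _ < ∞ := by
        rw [lintegral_const]
        exact ENNReal.mul_lt_top (ENNReal.mul_lt_top (by simp) hZ) (measure_lt_top _ _)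

end GaussianChannel

section OrnsteinUhlenbeck

variable {d : ℕ} {p : Measure (Euc d)} {r s t : ℝ}

/-- The time-`t` transition kernel of the Ornstein–Uhlenbeck process on `ℝ^d`. For `t < 0` the
square root takes its junk value `0`. -/
def ouKernel (d : ℕ) (t : ℝ) : Kernel (Euc d) (Euc d) :=
  gaussianChannel (exp (-t)) √(1 - exp (-2 * t))

instance isMarkovKernel_ouKernel : IsMarkovKernel (ouKernel d t) :=
  isMarkovKernel_gaussianChannel _ _

lemma ouKernel_comp (hr : 0 ≤ r) (hs : 0 ≤ s) :
    ouKernel d r ∘ₖ ouKernel d s = ouKernel d (s + r) := by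
  have hvar_r : 0 ≤ 1 - exp (-2 * r) := by simpa using hr
  have hvar_s : 0 ≤ 1 - exp (-2 * s) := by simpa using hs
  have hscale : exp (-r) * exp (-s) = exp (-(s + r)) := by
    rw [← exp_add]
    ring_nf
  have hnoise : (exp (-r) * √(1 - exp (-2 * s))) ^ 2 + √(1 - exp (-2 * r)) ^ 2 =
      1 - exp (-2 * (s + r)) := by
    rw [mul_pow, sq_sqrt hvar_s, sq_sqrt hvar_r, ← exp_nat_mul, mul_sub, ← exp_add]
    ring_nf
  rw [ouKernel, ouKernel, gaussianChannel_comp, hscale, hnoise, ouKernel]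

lemma stdGaussian_eq_probabilityTheory_stdGaussian : stdGaussian d = γ (Euc d) := by
  simp [stdGaussian, stdGaussian_eq_withDensity, isotropicGaussianPDF]

lemma ouMarginal_eq_comp [SFinite p] : ouMarginal d p t = ouKernel d t ∘ₘ p := by
  rw [ouMarginal, ouKernel, gaussianChannel_comp_measure,
    stdGaussian_eq_probabilityTheory_stdGaussian]

variable [IsFiniteMeasure p]

lemma posterior_ae_eq_posterior_ouKernel (ht : 0 < t) :
    posterior d p t =ᵐ[ouMarginal d p t] (ouKernel d t)†p := by
  have hvar : 0 < 1 - exp (-2 * t) := by simpa using ht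
  rw [ouMarginal_eq_comp]
  filter_upwards [gaussianChannel_posterior_ae_eq p (exp (-t)) (sqrt_pos.2 hvar).ne'] with x hx
  refine Eq.trans ?_ hx
  rw [bayesKernel_apply (by unfold Function.uncurry; fun_prop), posterior, sq_sqrt hvar.le]

lemma bayesRisk_sqLoss_ouKernel_lt_top : bayesRisk sqLoss (ouKernel d t) p < ∞ :=
  bayesRisk_sqLoss_gaussianChannel_lt_top p (exp_ne_zero _) _

lemma integral_postTrCov_eq_toReal_bayesRisk (ht : 0 < t) :
    ∫ x, postTrCov d p t x ∂ouMarginal d p t = (bayesRisk sqLoss (ouKernel d t) p).toReal := by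
  rw [← integral_integral_sq_norm_sub_posteriorMean _ _ bayesRisk_sqLoss_ouKernel_lt_top.ne,
    ← ouMarginal_eq_comp]
  refine integral_congr_ae ?_
  filter_upwards [posterior_ae_eq_posterior_ouKernel ht] with x hx
  rw [postTrCov, postMean, hx]

lemma integral_postTrCov_mono (hs : 0 < s) (hst : s ≤ t) :
    ∫ x, postTrCov d p s x ∂ouMarginal d p s ≤ ∫ x, postTrCov d p t x ∂ouMarginal d p t := by
  have hsemigroup : ouKernel d t = ouKernel d (t - s) ∘ₖ ouKernel d s := by
    rw [ouKernel_comp (sub_nonneg.2 hst) hs.le, add_sub_cancel]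
  rw [integral_postTrCov_eq_toReal_bayesRisk hs,
    integral_postTrCov_eq_toReal_bayesRisk (hs.trans_le hst)]
  refine ENNReal.toReal_mono bayesRisk_sqLoss_ouKernel_lt_top.ne ?_
  rw [hsemigroup]
  exact bayesRisk_le_bayesRisk_comp ..

lemma integral_postTrCov_le_integral_sq_norm_sub (hp : Integrable (fun x ↦ ‖x‖ ^ 2) p)
    (ht : 0 < t) (c : Euc d) :
    ∫ x, postTrCov d p t x ∂ouMarginal d p t ≤ ∫ x, ‖x - c‖ ^ 2 ∂p := by
  have hfinite : ∫⁻ x, sqLoss x c ∂p < ∞ :=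
    lintegral_sqLoss_lt_top_iff.2 ((memLp_two_iff_integrable_sq_norm (by fun_prop)).2 hp)
  rw [integral_postTrCov_eq_toReal_bayesRisk ht, ← toReal_lintegral_sqLoss]
  exact ENNReal.toReal_mono hfinite.ne
    ((bayesRisk_le_iInf measurable_sqLoss _ _).trans (iInf_le _ c))

end OrnsteinUhlenbeck

end ExpectedPosteriorVariance

theorem expected_posterior_variance_monotone_general
    (d : ℕ) (p : Measure (Euc d)) [IsFiniteMeasure p] :
    (∀ s t : ℝ, 0 < s → s ≤ t →
      (∫ x, postTrCov d p s x ∂(ouMarginal d p s)) ≤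
        ∫ x, postTrCov d p t x ∂(ouMarginal d p t)) ∧
    (Integrable (fun x => ‖x‖ ^ 2) p → ∀ t : ℝ, 0 < t → ∀ c : Euc d,
      (∫ x, postTrCov d p t x ∂(ouMarginal d p t)) ≤ ∫ x, ‖x - c‖ ^ 2 ∂p) :=
  ⟨fun _ _ ↦ integral_postTrCov_mono, fun hm2 _ ↦ integral_postTrCov_le_integral_sq_norm_sub hm2⟩

/-- **Monotonicity of the expected posterior variance** (used in the proof of
Proposition 3.1): for `0 < s ≤ t`,
`E_{x ∼ p_s}[Tr Σ_s(x)] ≤ E_{x ∼ p_t}[Tr Σ_t(x)]`, and for every `t > 0`,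
`E_{x ∼ p_t}[Tr Σ_t(x)] ≤ Tr Cov(p)`. -/
theorem expected_posterior_variance_monotone
    (d : ℕ) (hd : 1 ≤ d) (V : Euc d → ℝ) (hV : Measurable V)
    (p : Measure (Euc d)) (hprob : IsProbabilityMeasure p)
    (hp : p = ((gibbs d V) Set.univ)⁻¹ • gibbs d V)
    (hm2 : Integrable (fun x => ‖x‖ ^ 2) p) :
    (∀ s t : ℝ, 0 < s → s ≤ t →
      (∫ x, postTrCov d p s x ∂(ouMarginal d p s)) ≤
        ∫ x, postTrCov d p t x ∂(ouMarginal d p t)) ∧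
    (∀ t : ℝ, 0 < t →
      (∫ x, postTrCov d p t x ∂(ouMarginal d p t)) ≤
        ∫ x, ‖x - ∫ y, y ∂p‖ ^ 2 ∂p) :=
  ⟨(expected_posterior_variance_monotone_general d p).1,
    fun t ht ↦ (expected_posterior_variance_monotone_general d p).2 hm2 t ht _⟩
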